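/- (Theorem 2, feasibility.) Assume the Neumann-measurement setting described in the context, with θ₁ ∈ [0, π/2). Assume additionally that there is a constant C with |φₙ′(0)| ≤ C √λₙ for all n and that λₙ ≥ c₀ n² for some c₀ > 0 and all n large. Let K ∈ ℝ^{1×N₀} and L ∈ ℝ^{N₀} be such that every complex eigenvalue μ of F₁ satisfies Re μ < −|c|, and fix α₁, α₂, α₃, α₄ > 0 with 𝔠 := 1 − ½(|c|/α₁ + 1/α₂ + 1/α₃ + |c|/α₄) > 0. Then there exists N₁ ≥ N₀ + 1 such that for every N ≥ N₁ there exist ε ∈ (0, 1/2], a symmetric positive definite matrix P, symmetric positive semidefinite matrices Q₁, Q₂, and reals r₁, r₂, β, γ > 0 satisfying Ψ ≺ 0, Θ₁ ≺ 0, Θ₂ ≺ 0, Θ₃ < 0, Θ₄ < 0, and Θ₅ > 0. -/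

import Mathlib

open Real Set Matrix MeasureTheory

noncomputable section

/-- One-sided/within derivative on the spatial interval `[0,1]`. -/
def dI (f : ℝ → ℝ) (x : ℝ) : ℝ := derivWithin f (Set.Icc 0 1) x

/-- `L²(0,1)` inner product. -/
def ip (f g : ℝ → ℝ) : ℝ := ∫ x in (0:ℝ)..1, f x * g x

/-- The lifting function `a(x) = (2p(x) + 2xp'(x) - x²q̃(x))/(cos θ₂ + 2 sin θ₂)`. -/
def aFun (p qt : ℝ → ℝ) (θ₂ : ℝ) (x : ℝ) : ℝ :=
  (2 * p x + 2 * x * dI p x - x ^ 2 * qt x) / (Real.cos θ₂ + 2 * Real.sin θ₂)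

/-- The lifting function `b(x) = -x²/(cos θ₂ + 2 sin θ₂)`. -/
def bFun (θ₂ : ℝ) (x : ℝ) : ℝ := -x ^ 2 / (Real.cos θ₂ + 2 * Real.sin θ₂)

/-- Input coefficient `βₙ = aₙ + (-λₙ + q_c) bₙ`. -/
def betaC (p qt : ℝ → ℝ) (θ₂ q_c : ℝ) (lam : ℕ → ℝ) (phi : ℕ → ℝ → ℝ) (n : ℕ) : ℝ :=
  ip (aFun p qt θ₂) (phi n) + (-lam n + q_c) * ip (bFun θ₂) (phi n)

/-- Squared `L²`-norm `‖R_N f‖² = Σ_{n≥N+1} ⟨f,φₙ⟩²` of the residual `R_N f`. -/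
def RN2 (f : ℝ → ℝ) (phi : ℕ → ℝ → ℝ) (N : ℕ) : ℝ := ∑' k : ℕ, (ip f (phi (N + 1 + k)))^2

/-- `A₀ = diag(-λ₁+q_c, …, -λ_{N₀}+q_c)`. -/
def A0 (N₀ : ℕ) (lam : ℕ → ℝ) (q_c : ℝ) : Matrix (Fin N₀) (Fin N₀) ℝ :=
  Matrix.diagonal fun i => -lam (i.val + 1) + q_c

/-- `F₃ = A₁ = diag(-λ_{N₀+1}+q_c, …, -λ_N+q_c)`. -/
def A1 (N₀ N : ℕ) (lam : ℕ → ℝ) (q_c : ℝ) : Matrix (Fin (N - N₀)) (Fin (N - N₀)) ℝ :=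
  Matrix.diagonal fun i => -lam (N₀ + i.val + 1) + q_c

/-- `𝔅₀ = (β₁,…,β_{N₀})ᵀ`. -/
def B0 (N₀ : ℕ) (p qt : ℝ → ℝ) (θ₂ q_c : ℝ) (lam : ℕ → ℝ) (phi : ℕ → ℝ → ℝ) :
    Fin N₀ → ℝ :=
  fun i => betaC p qt θ₂ q_c lam phi (i.val + 1)

/-- `F₁ = [[A₀+𝔅₀K, LC₀],[0, A₀-LC₀]]`. -/
def F1 (N₀ : ℕ) (lam : ℕ → ℝ) (q_c : ℝ) (B0v C0v K L : Fin N₀ → ℝ) :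
    Matrix (Fin N₀ ⊕ Fin N₀) (Fin N₀ ⊕ Fin N₀) ℝ :=
  Matrix.fromBlocks (A0 N₀ lam q_c + Matrix.vecMulVec B0v K) (Matrix.vecMulVec L C0v) 0
    (A0 N₀ lam q_c - Matrix.vecMulVec L C0v)

/-- `F₂ = [LC̃₁; -LC̃₁]`. -/
def F2 (N₀ N : ℕ) (L : Fin N₀ → ℝ) (Ct : Fin (N - N₀) → ℝ) :
    Matrix (Fin N₀ ⊕ Fin N₀) (Fin (N - N₀)) ℝ :=
  Matrix.of fun i j => Sum.elim (fun a' => L a' * Ct j) (fun a' => -(L a' * Ct j)) i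

/-- `ℒ = col(L,-L)`. -/
def Lv (N₀ : ℕ) (L : Fin N₀ → ℝ) : Fin N₀ ⊕ Fin N₀ → ℝ := Sum.elim L fun a' => -L a'

/-- `K̃ = [K 0]`. -/
def Kt (N₀ : ℕ) (K : Fin N₀ → ℝ) : Fin N₀ ⊕ Fin N₀ → ℝ := Sum.elim K 0

/-- Index type of the matrix `Ψ` (blocks of sizes `2N₀`, `N-N₀`, `1`). -/
abbrev SIdx (N₀ N : ℕ) := ((Fin N₀ ⊕ Fin N₀) ⊕ Fin (N - N₀)) ⊕ Unit

/-- The row vector `E = K̃ [F₁ F₂ ℒ]`. -/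
def Erow (N₀ N : ℕ) (F1m : Matrix (Fin N₀ ⊕ Fin N₀) (Fin N₀ ⊕ Fin N₀) ℝ)
    (F2m : Matrix (Fin N₀ ⊕ Fin N₀) (Fin (N - N₀)) ℝ)
    (Lvv Ktv : Fin N₀ ⊕ Fin N₀ → ℝ) : SIdx N₀ N → ℝ :=
  Sum.elim (Sum.elim (Matrix.vecMul Ktv F1m) (Matrix.vecMul Ktv F2m)) fun _ => Ktv ⬝ᵥ Lvv

/-- The matrix `Ψ` of the LMI conditions. -/
def PsiM (N₀ N : ℕ)
    (P Q1 F1m : Matrix (Fin N₀ ⊕ Fin N₀) (Fin N₀ ⊕ Fin N₀) ℝ)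
    (Q2 F3m : Matrix (Fin (N - N₀)) (Fin (N - N₀)) ℝ)
    (F2m : Matrix (Fin N₀ ⊕ Fin N₀) (Fin (N - N₀)) ℝ)
    (Lvv Ktv : Fin N₀ ⊕ Fin N₀ → ℝ) (E : SIdx N₀ N → ℝ)
    (c r₁ βs γ α₂ α₃ RNa2 RNb2 : ℝ) : Matrix (SIdx N₀ N) (SIdx N₀ N) ℝ :=
  Matrix.fromBlocks
    (Matrix.fromBlocks
      (F1mᵀ * P + P * F1m + |c| • P + Q1 + (α₂ * γ * RNa2) • Matrix.vecMulVec Ktv Ktv)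
      (P * F2m)
      ((P * F2m)ᵀ)
      (r₁ • ((2:ℝ) • F3m + |c| • (1 : Matrix (Fin (N - N₀)) (Fin (N - N₀)) ℝ)) + Q2))
    (Matrix.of fun i (_ : Unit) => Sum.elim (P.mulVec Lvv) (fun _ => 0) i)
    (Matrix.of fun (_ : Unit) j => Sum.elim (P.mulVec Lvv) (fun _ => 0) j)
    (Matrix.of fun _ _ => -βs)
  + (2 * α₃ * γ * RNb2) • Matrix.vecMulVec E E

/-- The matrix `Θ₁`. -/
def Theta1 (N₀ : ℕ) (P Q1 : Matrix (Fin N₀ ⊕ Fin N₀) (Fin N₀ ⊕ Fin N₀) ℝ)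
    (Ktv : Fin N₀ ⊕ Fin N₀ → ℝ) (c γ α₃ α₄ RNb2 : ℝ) :
    Matrix (Fin N₀ ⊕ Fin N₀) (Fin N₀ ⊕ Fin N₀) ℝ :=
  |c| • P - Q1 + ((2*α₃*|c| + α₄) * γ * |c| * RNb2) • Matrix.vecMulVec Ktv Ktv

/-- The matrix `Θ₂`. -/
def Theta2 (N₀ N : ℕ) (Q2 : Matrix (Fin (N - N₀)) (Fin (N - N₀)) ℝ) (r₁ c : ℝ) :
    Matrix (Fin (N - N₀)) (Fin (N - N₀)) ℝ :=
  (r₁ * |c|) • (1 : Matrix (Fin (N - N₀)) (Fin (N - N₀)) ℝ) - Q2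


open Filter Topology

/-!
Everything rests on positive definiteness being an open condition. Let `P` solve a strict Lyapunov
inequality for `F₁ + |c| I`, with residual `S ≻ 0`, and put `Q₁ = |c| P + S / 2`: as
`‖R_N a‖, ‖R_N b‖ → 0`, both `-Ψ₁` and `-Θ₁` tend to `S / 2`. With `Q₂ = -r₁ F₃` both `Ψ₂` and `Θ₂`
equal `r₁ (F₃ + |c| I)`, which is negative definite. A large multiple of a positive definite
diagonal block absorbs any fixed off-diagonal block; this is used twice, first to choose `β`,
independently of `N`, against `P ℒ`, and then to choose `r₁`, depending on `N`, against `P F₂` and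
the remaining part of `Eᵀ E`. As `β` stays bounded and `M_φ → 0`, the scalar constraints are
satisfied for large `N` with `γ = 1` and a fixed `r₂ > α₁ |c|`: in `Θ₄` the term `-2 γ 𝔠 λ_{N+1}`
dominates, and `Θ₅ → 2 γ 𝔠`.
-/

section PosDef

variable {m n : Type*} [Finite m] [Finite n]

lemma eventually_posDef_of_tendsto {ι : Type*} {l : Filter ι} {A : ι → Matrix n n ℝ}
    {M : Matrix n n ℝ} (hM : M.PosDef) (hA : Tendsto A l (𝓝 M))
    (hA' : ∀ᶠ i in l, (A i).IsHermitian) : ∀ᶠ i in l, (A i).PosDef := by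
  cases nonempty_fintype n
  have hcont : Continuous fun q : Matrix n n ℝ × (n → ℝ) => q.2 ⬝ᵥ (q.1 *ᵥ q.2) := by fun_prop
  have hsphere : ∀ᶠ B in 𝓝 M, ∀ x ∈ Metric.sphere (0 : n → ℝ) 1, 0 < x ⬝ᵥ (B *ᵥ x) :=
    (isCompact_sphere 0 1).eventually_forall_of_forall_eventually fun x hx =>
      hcont.continuousAt.eventually_const_lt <|
        hM.dotProduct_mulVec_pos (ne_zero_of_mem_unit_sphere ⟨x, hx⟩)
  filter_upwards [hA.eventually hsphere, hA'] with i hpos hherm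
  refine .of_dotProduct_mulVec_pos hherm fun x hx => ?_
  have hunit := hpos (‖x‖⁻¹ • x) (by simp [norm_smul, hx])
  rw [mulVec_smul, smul_dotProduct, dotProduct_smul, smul_smul, smul_eq_mul] at hunit
  exact pos_of_mul_pos_right hunit (by positivity)

lemma posDef_fromBlocks_diag {X : Matrix m m ℝ} {Y : Matrix n n ℝ} (hX : X.PosDef)
    (hY : Y.PosDef) : (fromBlocks X 0 0 Y).PosDef := by
  cases nonempty_fintype m
  cases nonempty_fintype n
  refine .of_dotProduct_mulVec_pos
    (hX.isHermitian.fromBlocks conjTranspose_zero hY.isHermitian) fun w hw => ?_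
  obtain ⟨u, v, rfl⟩ : ∃ u v, w = Sum.elim u v := ⟨_, _, (Sum.elim_comp_inl_inr w).symm⟩
  have hu := hX.posSemidef.dotProduct_mulVec_nonneg u
  have hv := hY.posSemidef.dotProduct_mulVec_nonneg v
  rw [star_trivial] at hu hv ⊢
  simp only [fromBlocks_mulVec, Sum.elim_comp_inl, Sum.elim_comp_inr, zero_mulVec, add_zero,
    zero_add, sumElim_dotProduct_sumElim]
  by_cases hu0 : u = 0
  · have hv0 : v ≠ 0 := by rintro rfl; exact hw (by simp [hu0])
    exact add_pos_of_nonneg_of_pos hu (hY.dotProduct_mulVec_pos hv0)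
  · exact add_pos_of_pos_of_nonneg (hX.dotProduct_mulVec_pos hu0) hv

lemma eventually_posDef_fromBlocks_smul_add {X : Matrix m m ℝ} {Y Z : Matrix n n ℝ}
    (hX : X.PosDef) (hY : Y.PosDef) (hZ : Z.IsHermitian) (B : Matrix m n ℝ) :
    ∀ᶠ r : ℝ in atTop, (fromBlocks X B Bᵀ (r • Y + Z)).PosDef := by
  classical
  cases nonempty_fintype m
  cases nonempty_fintype n
  have hlim : Tendsto (fun r : ℝ => fromBlocks X ((√r)⁻¹ • B) ((√r)⁻¹ • B)ᵀ (Y + r⁻¹ • Z)) atTop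
      (𝓝 (fromBlocks X 0 0 Y)) := by
    have hcont : Continuous fun q : ℝ × ℝ => fromBlocks X (q.1 • B) (q.1 • B)ᵀ (Y + q.2 • Z) := by
      fun_prop
    simpa [Function.comp_def] using (hcont.tendsto (0, 0)).comp
      ((tendsto_inv_atTop_zero.comp tendsto_sqrt_atTop).prodMk_nhds tendsto_inv_atTop_zero)
  filter_upwards [eventually_posDef_of_tendsto (posDef_fromBlocks_diag hX hY) hlim
    (.of_forall fun r => hX.isHermitian.fromBlocks (by simp)
      (hY.isHermitian.add (hZ.smul (.all _)))), eventually_gt_atTop 0] with r hr hr0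
  -- `r • Y + Z` is brought to `Y + r⁻¹ • Z` by the congruence with `diag(1, √r)`
  have hs : √r ≠ 0 := by positivity
  have hU : IsUnit (fromBlocks (1 : Matrix m m ℝ) 0 0 (√r • (1 : Matrix n n ℝ))) := by
    rw [isUnit_fromBlocks_zero₁₂]
    exact ⟨isUnit_one, isUnit_one.smul (Units.mk0 _ hs)⟩
  convert hU.posDef_star_left_conjugate_iff.2 hr using 1
  have hss : √r * √r = r := mul_self_sqrt hr0.le
  have hsr : √r * (√r * r⁻¹) = 1 := by rw [← mul_assoc, hss, mul_inv_cancel₀ hr0.ne']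
  simp [star_eq_conjTranspose, fromBlocks_transpose, fromBlocks_multiply, smul_smul, hs, hss, hsr]

end PosDef

section StableMatrix

lemma tendsto_pow_zero_of_spectrum {R : Type*} [NormedRing R] [NormedAlgebra ℂ R]
    [CompleteSpace R] [Nontrivial R] {b : R} (hb : ∀ z ∈ spectrum ℂ b, ‖z‖ < 1) :
    Tendsto (b ^ ·) atTop (𝓝 0) := by
  have hρ : spectralRadius ℂ b < (1 : NNReal) :=
    spectrum.spectralRadius_lt_of_forall_lt b fun z hz => by exact_mod_cast hb z hz
  obtain ⟨r, hbr, hr⟩ := ENNReal.lt_iff_exists_nnreal_btwn.1 hρ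
  have hr : r < 1 := by exact_mod_cast hr
  refine squeeze_zero_norm' ?_ (tendsto_pow_atTop_nhds_zero_of_lt_one r.2 (by exact_mod_cast hr))
  have hgelfand := spectrum.pow_nnnorm_pow_one_div_tendsto_nhds_spectralRadius b
  filter_upwards [hgelfand.eventually_lt_const hbr, eventually_gt_atTop 0] with k hk hk0
  have hk' : (‖b ^ k‖₊ : ENNReal) ≤ (r : ENNReal) ^ k := by
    rw [← ENNReal.rpow_natCast, ← ENNReal.rpow_inv_le_iff (by exact_mod_cast hk0), ← one_div]
    exact hk.le
  exact_mod_cast hk'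

variable {n : Type*} [Fintype n] [DecidableEq n]

open scoped Matrix.Norms.L2Operator in
lemma tendsto_matrix_pow_zero_of_spectrum {B : Matrix n n ℝ}
    (hB : ∀ z ∈ spectrum ℂ (B.map (Complex.ofReal : ℝ → ℂ)), ‖z‖ < 1) :
    Tendsto (B ^ ·) atTop (𝓝 0) := by
  cases isEmpty_or_nonempty n
  · simp [Subsingleton.elim _ (0 : Matrix n n ℝ)]
  have hre : Continuous fun C : Matrix n n ℂ => C.map Complex.re := by fun_prop
  convert (hre.tendsto 0).comp (tendsto_pow_zero_of_spectrum hB) using 1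
  · ext k i j
    change _ = ((Complex.ofRealHom.mapMatrix B ^ k) i j).re
    rw [← map_pow]
    rfl
  · simp

lemma exists_posDef_sub_conj {B : Matrix n n ℝ}
    (hB : ∀ z ∈ spectrum ℂ (B.map (Complex.ofReal : ℝ → ℂ)), ‖z‖ < 1) :
    ∃ P : Matrix n n ℝ, P.PosDef ∧ (P - Bᵀ * P * B).PosDef := by
  have hpow := tendsto_matrix_pow_zero_of_spectrum hB
  have hlim : Tendsto (fun k : ℕ => 1 - (B ^ k)ᵀ * B ^ k) atTop (𝓝 1) := by
    have hcont : Continuous fun C : Matrix n n ℝ => 1 - Cᵀ * C := by fun_prop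
    simpa [Function.comp_def] using (hcont.tendsto 0).comp hpow
  obtain ⟨k, hk⟩ := (eventually_posDef_of_tendsto .one hlim (.of_forall fun k =>
    isHermitian_one.sub (isHermitian_conjTranspose_mul_self (B ^ k)))).exists
  set P := ∑ i ∈ Finset.range k, (B ^ i)ᵀ * B ^ i with hP
  have htele : P - Bᵀ * P * B = 1 - (B ^ k)ᵀ * B ^ k := by
    rw [hP, Finset.mul_sum, Finset.sum_mul, ← Finset.sum_sub_distrib]
    convert Finset.sum_range_sub' (fun i => (B ^ i)ᵀ * B ^ i) k using 1
    · refine Finset.sum_congr rfl fun i _ => ?_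
      simp only [pow_succ, transpose_mul, Matrix.mul_assoc]
    · simp
  have hpsd : P.PosSemidef :=
    posSemidef_sum _ fun i _ => posSemidef_conjTranspose_mul_self (B ^ i)
  have hsub : (P - Bᵀ * P * B).PosDef := htele ▸ hk
  refine ⟨P, ?_, hsub⟩
  simpa using hsub.add_posSemidef (hpsd.conjTranspose_mul_mul_same B)

lemma eventually_norm_one_add_smul_lt_one {z : ℂ} (hz : z.re < 0) :
    ∀ᶠ h : ℝ in 𝓝[>] 0, ‖1 + h • z‖ < 1 := by
  have hlim : Tendsto (fun h : ℝ => 2 * z.re + h * Complex.normSq z) (𝓝[>] 0) (𝓝 (2 * z.re)) := by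
    have hcont : Continuous fun h : ℝ => 2 * z.re + h * Complex.normSq z := by fun_prop
    simpa using (hcont.tendsto 0).mono_left nhdsWithin_le_nhds
  have hlim_neg : 2 * z.re < 0 := by linarith
  filter_upwards [hlim.eventually_lt_const hlim_neg, self_mem_nhdsWithin] with h hneg hpos
  have hsq : ‖1 + h • z‖ ^ 2 = 1 + h * (2 * z.re + h * Complex.normSq z) := by
    rw [← Complex.normSq_eq_norm_sq, Complex.normSq_apply, Complex.normSq_apply]
    simp only [Complex.add_re, Complex.add_im, Complex.one_re, Complex.one_im, Complex.smul_re,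
      Complex.smul_im, smul_eq_mul]
    ring
  refine lt_of_pow_lt_pow_left₀ 2 zero_le_one ?_
  rw [hsq, one_pow]
  linarith [mul_neg_of_pos_of_neg hpos hneg]

lemma exists_mem_spectrum_of_mem_spectrum_smul_one_add_smul {A : Matrix n n ℝ} {s h : ℝ}
    (hh : h ≠ 0) {z : ℂ} (hz : z ∈ spectrum ℂ ((s • 1 + h • A).map (Complex.ofReal : ℝ → ℂ))) :
    ∃ w ∈ spectrum ℂ (A.map (Complex.ofReal : ℝ → ℂ)), z = s + h • w := by
  have hmap : (s • 1 + h • A).map (Complex.ofReal : ℝ → ℂ) =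
      algebraMap ℂ _ (s : ℂ) + Units.mk0 (h : ℂ) (by exact_mod_cast hh) • A.map Complex.ofReal := by
    ext i j
    simp [Matrix.algebraMap_matrix_apply, Matrix.one_apply, apply_ite (Complex.ofReal : ℝ → ℂ)]
  rw [hmap, ← spectrum.singleton_add_eq, spectrum.unit_smul_eq_smul, Set.singleton_add] at hz
  obtain ⟨_, ⟨w, hw, rfl⟩, rfl⟩ := hz
  exact ⟨w, hw, by simp⟩

-- For small `h > 0`, the Euler step `1 + h A` reduces this to the discrete-time inequality.
lemma exists_posDef_lyapunov {A : Matrix n n ℝ}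
    (hA : ∀ z ∈ spectrum ℂ (A.map (Complex.ofReal : ℝ → ℂ)), z.re < 0) :
    ∃ P : Matrix n n ℝ, P.PosDef ∧ (-(Aᵀ * P + P * A)).PosDef := by
  obtain ⟨h, hstep, hpos⟩ := (((Matrix.finite_spectrum _).eventually_all.2 fun z hz =>
    eventually_norm_one_add_smul_lt_one (hA z hz)).and self_mem_nhdsWithin).exists
  replace hpos : 0 < h := hpos
  obtain ⟨P, hP, hsub⟩ := exists_posDef_sub_conj (B := (1 : ℝ) • 1 + h • A) fun z hz => by
    obtain ⟨w, hw, rfl⟩ := exists_mem_spectrum_of_mem_spectrum_smul_one_add_smul hpos.ne' hz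
    simpa using hstep w hw
  refine ⟨P, hP, ?_⟩
  have hAPA : (Aᵀ * P * A).PosSemidef := hP.posSemidef.conjTranspose_mul_mul_same A
  convert (hsub.add_posSemidef (hAPA.smul (sq_nonneg h))).smul (inv_pos.2 hpos) using 1
  have hexpand : P - ((1 : ℝ) • 1 + h • A)ᵀ * P * ((1 : ℝ) • 1 + h • A) + h ^ 2 • (Aᵀ * P * A) =
      h • -(Aᵀ * P + P * A) := by
    simp only [one_smul, transpose_add, transpose_one, transpose_smul, add_mul, mul_add, one_mul,
      mul_one, Matrix.smul_mul, Matrix.mul_smul]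
    module
  rw [hexpand, inv_smul_smul₀ hpos.ne']

lemma exists_posDef_lyapunov_of_re_lt {A : Matrix n n ℝ} {δ : ℝ}
    (hA : ∀ z ∈ spectrum ℂ (A.map (Complex.ofReal : ℝ → ℂ)), z.re < -δ) :
    ∃ P : Matrix n n ℝ, P.PosDef ∧ (-(Aᵀ * P + P * A + (2 * δ) • P)).PosDef := by
  obtain ⟨P, hP, hlyap⟩ := exists_posDef_lyapunov (A := δ • 1 + (1 : ℝ) • A) fun z hz => by
    obtain ⟨w, hw, rfl⟩ := exists_mem_spectrum_of_mem_spectrum_smul_one_add_smul one_ne_zero hz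
    simpa [← lt_neg_iff_add_neg'] using hA w hw
  refine ⟨P, hP, ?_⟩
  convert hlyap using 2
  simp only [one_smul, transpose_add, transpose_one, transpose_smul, add_mul, mul_add, one_mul,
    mul_one, Matrix.smul_mul, Matrix.mul_smul]
  module

end StableMatrix

section Feasibility

lemma isHermitian_vecMulVec_self {m : Type*} (v : m → ℝ) : (vecMulVec v v).IsHermitian := by
  simp [IsHermitian]

/-- The principal submatrix of `Ψ` left after deleting the rows and columns of its `F₃` block,
with `δ = |c|`, `s = α₂ γ ‖R_N a‖²` and `t = 2 α₃ γ ‖R_N b‖²`. Unlike `Ψ`, it has a size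
independent of `N`, so that it can be passed to the limit `s, t → 0`. -/
def psiCorner {m : Type*} [Fintype m] (P Q F : Matrix m m ℝ) (ℓ κ : m → ℝ) (δ β s t : ℝ) :
    Matrix (m ⊕ Unit) (m ⊕ Unit) ℝ :=
  fromBlocks (Fᵀ * P + P * F + δ • P + Q + s • vecMulVec κ κ) (replicateCol Unit (P *ᵥ ℓ))
    (replicateCol Unit (P *ᵥ ℓ))ᵀ (-β • 1)
    + t • vecMulVec (Sum.elim (κ ᵥ* F) fun _ => κ ⬝ᵥ ℓ) (Sum.elim (κ ᵥ* F) fun _ => κ ⬝ᵥ ℓ)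

section
variable {m : Type*} [Fintype m]

lemma isHermitian_psiCorner {P Q : Matrix m m ℝ} (hP : P.IsHermitian) (hQ : Q.IsHermitian)
    (F : Matrix m m ℝ) (ℓ κ : m → ℝ) (δ β s t : ℝ) :
    (psiCorner P Q F ℓ κ δ β s t).IsHermitian := by
  have hlyap : (Fᵀ * P + P * F).IsHermitian := by
    simp only [IsHermitian, conjTranspose_eq_transpose_of_trivial, transpose_add, transpose_mul,
      transpose_transpose, add_comm] at hP ⊢
    rw [hP]
  have hcorner := ((hlyap.add (hP.smul (.all δ))).add hQ).add
    ((isHermitian_vecMulVec_self κ).smul (.all s))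
  exact (hcorner.fromBlocks rfl (isHermitian_one.smul (.all (-β)))).add
    ((isHermitian_vecMulVec_self _).smul (.all t))

lemma exists_posDef_lyapunov_split [DecidableEq m] {F : Matrix m m ℝ} {δ : ℝ}
    (hF : ∀ z ∈ spectrum ℂ (F.map (Complex.ofReal : ℝ → ℂ)), z.re < -δ) :
    ∃ P Q : Matrix m m ℝ, P.PosDef ∧ (Q - δ • P).PosDef ∧
      (-(Fᵀ * P + P * F + δ • P + Q)).PosDef := by
  obtain ⟨P, hP, hlyap⟩ := exists_posDef_lyapunov_of_re_lt hF
  have hhalf := hlyap.smul (one_half_pos (α := ℝ))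
  refine ⟨P, δ • P + (1 / 2 : ℝ) • -(Fᵀ * P + P * F + (2 * δ) • P), hP, ?_, ?_⟩
  · rwa [add_sub_cancel_left]
  · convert hhalf using 1
    module

lemma eventually_posDef_neg_psiCorner_zero {P Q F : Matrix m m ℝ} {δ : ℝ}
    (h : (-(Fᵀ * P + P * F + δ • P + Q)).PosDef) (ℓ κ : m → ℝ) :
    ∀ᶠ β in atTop, (-psiCorner P Q F ℓ κ δ β 0 0).PosDef := by
  filter_upwards [eventually_posDef_fromBlocks_smul_add h .one isHermitian_zero
    (-replicateCol Unit (P *ᵥ ℓ))] with β hβ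
  simpa [psiCorner, fromBlocks_neg] using hβ

lemma eventually_posDef_neg_psiCorner {ι : Type*} {l : Filter ι} {P Q F : Matrix m m ℝ}
    {ℓ κ : m → ℝ} {δ β : ℝ} (hP : P.IsHermitian) (hQ : Q.IsHermitian)
    (h : (-psiCorner P Q F ℓ κ δ β 0 0).PosDef) {s t : ι → ℝ}
    (hs : Tendsto s l (𝓝 0)) (ht : Tendsto t l (𝓝 0)) :
    ∀ᶠ i in l, (-psiCorner P Q F ℓ κ δ β (s i) (t i)).PosDef := by
  have hcont : Continuous fun q : ℝ × ℝ => -psiCorner P Q F ℓ κ δ β q.1 q.2 := by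
    unfold psiCorner
    fun_prop
  have hlim : Tendsto (fun i => -psiCorner P Q F ℓ κ δ β (s i) (t i)) l
      (𝓝 (-psiCorner P Q F ℓ κ δ β 0 0)) := by
    simpa only [Function.comp_def] using (hcont.tendsto (0, 0)).comp (hs.prodMk_nhds ht)
  exact eventually_posDef_of_tendsto h hlim
    (.of_forall fun i => (isHermitian_psiCorner hP hQ F ℓ κ δ β (s i) (t i)).neg)

end

lemma eventually_posDef_neg_PsiM {N₀ N : ℕ}
    {P Q1 F1m : Matrix (Fin N₀ ⊕ Fin N₀) (Fin N₀ ⊕ Fin N₀) ℝ}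
    {F3m : Matrix (Fin (N - N₀)) (Fin (N - N₀)) ℝ} {Lvv Ktv : Fin N₀ ⊕ Fin N₀ → ℝ}
    {c βs γ α₂ α₃ RNa2 RNb2 : ℝ}
    (hcorner : (-psiCorner P Q1 F1m Lvv Ktv |c| βs (α₂ * γ * RNa2) (2 * α₃ * γ * RNb2)).PosDef)
    (hF3 : (-(F3m + |c| • 1)).PosDef) (F2m : Matrix (Fin N₀ ⊕ Fin N₀) (Fin (N - N₀)) ℝ) :
    ∀ᶠ r₁ : ℝ in atTop, (-PsiM N₀ N P Q1 F1m (r₁ • -F3m) F3m F2m Lvv Ktv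
      (Erow N₀ N F1m F2m Lvv Ktv) c r₁ βs γ α₂ α₃ RNa2 RNb2).PosDef := by
  set e : (Fin N₀ ⊕ Fin N₀) ⊕ Unit → ℝ := Sum.elim (Ktv ᵥ* F1m) fun _ => Ktv ⬝ᵥ Lvv
  set f : Fin (N - N₀) → ℝ := Ktv ᵥ* F2m
  set t := 2 * α₃ * γ * RNb2
  have hreorder : Function.Injective
      (((Equiv.sumAssoc _ _ _).trans ((Equiv.refl _).sumCongr (Equiv.sumComm _ _))).trans
        (Equiv.sumAssoc _ _ _).symm : SIdx N₀ N ≃ ((Fin N₀ ⊕ Fin N₀) ⊕ Unit) ⊕ Fin (N - N₀)) :=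
    Equiv.injective _
  filter_upwards [eventually_posDef_fromBlocks_smul_add hcorner hF3
    (Z := -(t • vecMulVec f f)) ((isHermitian_vecMulVec_self f).smul (.all t)).neg
    (-(fromRows (P * F2m) 0 + t • vecMulVec e f))] with r₁ hr₁
  have hΨ₂ : r₁ • ((2 : ℝ) • F3m + |c| • 1) + r₁ • -F3m = -(r₁ • -(F3m + |c| • 1)) := by module
  generalize -(F3m + |c| • 1) = D at hr₁ hΨ₂
  convert hr₁.submatrix hreorder using 1
  rw [PsiM, hΨ₂]
  ext ((i | i) | i) ((j | j) | j) <;>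
    simp [Erow, psiCorner, vecMulVec_apply, e, f, t, -transpose_mul, -neg_add_rev, neg_add]

lemma eventually_posDef_neg_Theta1 {N₀ : ℕ} {P Q1 : Matrix (Fin N₀ ⊕ Fin N₀) (Fin N₀ ⊕ Fin N₀) ℝ}
    {c : ℝ} (h : (Q1 - |c| • P).PosDef) {ι : Type*} {l : Filter ι} {R : ι → ℝ}
    (hR : Tendsto R l (𝓝 0)) (Ktv : Fin N₀ ⊕ Fin N₀ → ℝ) (γ α₃ α₄ : ℝ) :
    ∀ᶠ i in l, (-Theta1 N₀ P Q1 Ktv c γ α₃ α₄ (R i)).PosDef := by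
  have hTheta1 (r : ℝ) : -Theta1 N₀ P Q1 Ktv c γ α₃ α₄ r =
      Q1 - |c| • P - ((2 * α₃ * |c| + α₄) * γ * |c| * r) • vecMulVec Ktv Ktv := by
    rw [Theta1]
    abel
  simp only [hTheta1]
  refine eventually_posDef_of_tendsto h ?_ (.of_forall fun i =>
    h.isHermitian.sub ((isHermitian_vecMulVec_self Ktv).smul (.all _)))
  simpa using ((hR.const_mul ((2 * α₃ * |c| + α₄) * γ * |c|)).smul_const
    (vecMulVec Ktv Ktv)).const_sub (Q1 - |c| • P)

section
variable {N₀ N : ℕ} {F3m : Matrix (Fin (N - N₀)) (Fin (N - N₀)) ℝ} {c r₁ : ℝ}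

lemma posSemidef_smul_neg_of_posDef_neg_add (h : (-(F3m + |c| • 1)).PosDef) (hr₁ : 0 ≤ r₁) :
    (r₁ • -F3m).PosSemidef := by
  have hsum := h.posSemidef.add (PosSemidef.one.smul (abs_nonneg c))
  rw [neg_add, neg_add_cancel_right] at hsum
  exact hsum.smul hr₁

lemma posDef_neg_Theta2 (h : (-(F3m + |c| • 1)).PosDef) (hr₁ : 0 < r₁) :
    (-Theta2 N₀ N (r₁ • -F3m) r₁ c).PosDef := by
  convert h.smul hr₁ using 1
  rw [Theta2]
  module

end

lemma exists_eventually_lmi {N₀ : ℕ} {F1m : Matrix (Fin N₀ ⊕ Fin N₀) (Fin N₀ ⊕ Fin N₀) ℝ}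
    {F3m : ∀ N, Matrix (Fin (N - N₀)) (Fin (N - N₀)) ℝ} {c : ℝ} {ra rb : ℕ → ℝ}
    (hF1spec : ∀ μ ∈ spectrum ℂ (F1m.map (Complex.ofReal : ℝ → ℂ)), μ.re < -|c|)
    (hF3 : ∀ N, (-(F3m N + |c| • 1)).PosDef)
    (hra : Tendsto ra atTop (𝓝 0)) (hrb : Tendsto rb atTop (𝓝 0))
    (F2m : ∀ N, Matrix (Fin N₀ ⊕ Fin N₀) (Fin (N - N₀)) ℝ) (Lvv Ktv : Fin N₀ ⊕ Fin N₀ → ℝ)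
    (γ α₂ α₃ α₄ : ℝ) :
    ∃ (P Q1 : Matrix (Fin N₀ ⊕ Fin N₀) (Fin N₀ ⊕ Fin N₀) ℝ) (βs : ℝ),
      P.PosDef ∧ Q1.PosSemidef ∧ 0 < βs ∧ ∀ᶠ N in atTop,
        (-Theta1 N₀ P Q1 Ktv c γ α₃ α₄ (rb N)).PosDef ∧
        ∃ (Q2 : Matrix (Fin (N - N₀)) (Fin (N - N₀)) ℝ) (r₁ : ℝ), Q2.PosSemidef ∧ 0 < r₁ ∧
          (-PsiM N₀ N P Q1 F1m Q2 (F3m N) (F2m N) Lvv Ktv (Erow N₀ N F1m (F2m N) Lvv Ktv)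
            c r₁ βs γ α₂ α₃ (ra N) (rb N)).PosDef ∧
          (-Theta2 N₀ N Q2 r₁ c).PosDef := by
  obtain ⟨P, Q1, hP, hQ1P, hlyap⟩ := exists_posDef_lyapunov_split hF1spec
  have hQ1 : Q1.PosDef := by
    simpa using hQ1P.add_posSemidef (hP.posSemidef.smul (abs_nonneg c))
  obtain ⟨βs, hlimit, hβs⟩ := ((eventually_posDef_neg_psiCorner_zero hlyap Lvv Ktv).and
    (eventually_gt_atTop 0)).exists
  have hs : Tendsto (fun N => α₂ * γ * ra N) atTop (𝓝 0) := by
    simpa using hra.const_mul (α₂ * γ)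
  have ht : Tendsto (fun N => 2 * α₃ * γ * rb N) atTop (𝓝 0) := by
    simpa using hrb.const_mul (2 * α₃ * γ)
  refine ⟨P, Q1, βs, hP, hQ1.posSemidef, hβs, ?_⟩
  filter_upwards [eventually_posDef_neg_psiCorner hP.isHermitian hQ1.isHermitian hlimit hs ht,
    eventually_posDef_neg_Theta1 hQ1P hrb Ktv γ α₃ α₄] with N hcorner hΘ₁
  obtain ⟨r₁, hΨ, hr₁⟩ := ((eventually_posDef_neg_PsiM hcorner (hF3 N) (F2m N)).and
    (eventually_gt_atTop 0)).exists
  exact ⟨hΘ₁, r₁ • -F3m N, r₁, posSemidef_smul_neg_of_posDef_neg_add (hF3 N) hr₁.le, hr₁, hΨ,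
    posDef_neg_Theta2 (hF3 N) hr₁⟩

end Feasibility

section Scalar
variable {ι : Type*} {l : Filter ι} {lam M : ι → ℝ}

lemma tendsto_mul_rpow_of_nonpos (hM : Tendsto M l (𝓝 0)) (hlam : Tendsto lam l atTop) {s : ℝ}
    (hs : s ≤ 0) : Tendsto (fun i => M i * lam i ^ s) l (𝓝 0) := by
  refine squeeze_zero_norm' ?_ (tendsto_zero_iff_norm_tendsto_zero.1 hM)
  filter_upwards [hlam.eventually_ge_atTop 1] with i hi
  have hpow : ‖lam i ^ s‖ ≤ 1 := by
    rw [norm_of_nonneg (by positivity)]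
    exact rpow_le_one_of_one_le_of_nonpos hi hs
  simpa [norm_mul] using mul_le_of_le_one_right (norm_nonneg (M i)) hpow

lemma eventually_theta4_neg (hM : Tendsto M l (𝓝 0)) (hlam : Tendsto lam l atTop) {ε γ cf : ℝ}
    (hε : ε ≤ 1 / 2) (hγ : 0 < γ) (hcf : 0 < cf) (q_c β r : ℝ) :
    ∀ᶠ i in l, 2 * γ * (-cf * lam i + q_c) + β * M i * lam i ^ (1 / 2 + ε) + r / lam i < 0 := by
  have hinv : Tendsto (fun i => (lam i)⁻¹) l (𝓝 0) := tendsto_inv_atTop_zero.comp hlam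
  have hquot : Tendsto (fun i => 2 * γ * (-cf + q_c * (lam i)⁻¹) +
      β * (M i * lam i ^ (ε - 1 / 2)) + r * (lam i)⁻¹ * (lam i)⁻¹) l (𝓝 (-(2 * γ * cf))) := by
    convert ((((hinv.const_mul q_c).const_add (-cf)).const_mul (2 * γ)).add
      ((tendsto_mul_rpow_of_nonpos hM hlam (s := ε - 1 / 2) (by linarith)).const_mul β)).add
      ((hinv.const_mul r).mul hinv) using 2
    ring
  have hneg : -(2 * γ * cf) < 0 := by linarith [mul_pos hγ hcf]
  filter_upwards [hquot.eventually_lt_const hneg, hlam.eventually_gt_atTop 0] with i hi hpos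
  have hpow : lam i ^ (1 / 2 + ε) = lam i * lam i ^ (ε - 1 / 2) := by
    nth_rw 2 [← rpow_one (lam i)]
    rw [← rpow_add hpos]
    ring_nf
  rw [hpow]
  refine Eq.trans_lt ?_ (mul_neg_of_pos_of_neg hpos hi)
  field_simp

lemma eventually_theta5_pos (hM : Tendsto M l (𝓝 0)) (hlam : Tendsto lam l atTop) {ε γ cf : ℝ}
    (hε : ε ≤ 1 / 2) (hγ : 0 < γ) (hcf : 0 < cf) (β : ℝ) :
    ∀ᶠ i in l, 0 < 2 * γ * cf - β * M i / lam i ^ (1 / 2 - ε) := by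
  have hlim := ((tendsto_mul_rpow_of_nonpos hM hlam (s := -(1 / 2 - ε)) (by linarith)).const_mul
    β).const_sub (2 * γ * cf)
  rw [mul_zero, sub_zero] at hlim
  filter_upwards [hlim.eventually_const_lt (by positivity), hlam.eventually_ge_atTop 0]
    with i hi hpos
  rwa [rpow_neg hpos, ← mul_assoc, ← div_eq_mul_inv] at hi

end Scalar

section Tails

lemma tendsto_tsum_tail_of_eventually_norm_le {E : Type*} [NormedAddCommGroup E]
    {f : ℕ → E} {g : ℕ → ℝ} (hg : Summable g) (hfg : ∀ᶠ n in atTop, ‖f n‖ ≤ g n) :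
    Tendsto (fun N => ∑' k, f (N + k)) atTop (𝓝 0) := by
  obtain ⟨N₁, hN₁⟩ := eventually_atTop.1 hfg
  refine squeeze_zero_norm' (a := fun N => ∑' k, g (k + N)) ?_ (tendsto_sum_nat_add g)
  filter_upwards [eventually_ge_atTop N₁] with N hN
  refine tsum_of_norm_bounded ((summable_nat_add_iff N).2 hg).hasSum fun k => ?_
  rw [add_comm k N]
  exact hN₁ _ (hN.trans (Nat.le_add_right N k))

lemma tendsto_atTop_of_sq_le {lam : ℕ → ℝ} {c₀ : ℝ} (hc₀ : 0 < c₀)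
    (hlam : ∀ᶠ n : ℕ in atTop, c₀ * (n : ℝ) ^ 2 ≤ lam n) : Tendsto lam atTop atTop :=
  tendsto_atTop_mono' atTop hlam <|
    ((tendsto_pow_atTop two_ne_zero).comp tendsto_natCast_atTop_atTop).const_mul_atTop hc₀

lemma eventually_sq_div_rpow_le {d lam : ℕ → ℝ} {C c₀ : ℝ} (hc₀ : 0 < c₀)
    (hd : ∀ᶠ n in atTop, |d n| ≤ C * √(lam n)) (hlam : ∀ᶠ n : ℕ in atTop, c₀ * (n : ℝ) ^ 2 ≤ lam n)
    {ε : ℝ} (hε : 0 < ε) :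
    ∀ᶠ n : ℕ in atTop, d n ^ 2 / lam n ^ ((3 : ℝ) / 2 + ε) ≤
      C ^ 2 * c₀ ^ (-(1 / 2 + ε)) * (1 / (n : ℝ) ^ (1 + 2 * ε)) := by
  filter_upwards [hd, hlam, eventually_gt_atTop 0] with n hdn hlamn hn
  have hn' : (0 : ℝ) < n := by exact_mod_cast hn
  have hpos : 0 < lam n := lt_of_lt_of_le (by positivity) hlamn
  have hsq : d n ^ 2 ≤ C ^ 2 * lam n := by
    calc d n ^ 2 = |d n| ^ 2 := (sq_abs _).symm
      _ ≤ (C * √(lam n)) ^ 2 := by gcongr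
      _ = C ^ 2 * lam n := by rw [mul_pow, sq_sqrt hpos.le]
  calc d n ^ 2 / lam n ^ ((3 : ℝ) / 2 + ε)
      ≤ C ^ 2 * lam n / lam n ^ ((3 : ℝ) / 2 + ε) := by gcongr
    _ = C ^ 2 * lam n ^ (-(1 / 2 + ε)) := by
      rw [mul_div_assoc, ← rpow_one_sub' hpos.le (by linarith)]
      ring_nf
    _ ≤ C ^ 2 * (c₀ * (n : ℝ) ^ 2) ^ (-(1 / 2 + ε)) := by
      gcongr ?_ * ?_
      exact rpow_le_rpow_of_nonpos (by positivity) hlamn (by linarith)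
    _ = C ^ 2 * c₀ ^ (-(1 / 2 + ε)) * (1 / (n : ℝ) ^ (1 + 2 * ε)) := by
      rw [mul_rpow hc₀.le (by positivity), ← rpow_natCast_mul hn'.le, one_div (_ ^ _),
        ← rpow_neg hn'.le, mul_assoc]
      congr 3
      push_cast
      ring

lemma tendsto_tsum_sq_div_rpow {d lam : ℕ → ℝ} {C c₀ : ℝ} (hc₀ : 0 < c₀)
    (hd : ∀ᶠ n in atTop, |d n| ≤ C * √(lam n)) (hlam : ∀ᶠ n : ℕ in atTop, c₀ * (n : ℝ) ^ 2 ≤ lam n)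
    {ε : ℝ} (hε : 0 < ε) :
    Tendsto (fun N => ∑' k, d (N + k) ^ 2 / lam (N + k) ^ ((3 : ℝ) / 2 + ε)) atTop (𝓝 0) := by
  have hsum : Summable fun n : ℕ => C ^ 2 * c₀ ^ (-(1 / 2 + ε)) * (1 / (n : ℝ) ^ (1 + 2 * ε)) :=
    (Real.summable_one_div_nat_rpow.2 (by linarith)).mul_left _
  refine tendsto_tsum_tail_of_eventually_norm_le
    (f := fun n => d n ^ 2 / lam n ^ ((3 : ℝ) / 2 + ε)) hsum ?_
  filter_upwards [eventually_sq_div_rpow_le hc₀ hd hlam hε, hlam] with n hn hlamn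
  have hpos : 0 ≤ lam n := le_trans (by positivity) hlamn
  rwa [norm_of_nonneg (by positivity)]

lemma ip_eq_zero_of_integral_sq_eq_zero {f : ℝ → ℝ} (hf : ContinuousOn f (Icc 0 1))
    (h : ∫ x in (0 : ℝ)..1, f x ^ 2 = 0) (g : ℝ → ℝ) : ip f g = 0 := by
  have hint : IntervalIntegrable (fun x => f x ^ 2) volume 0 1 :=
    (hf.pow 2).intervalIntegrable_of_Icc zero_le_one
  have hae := (intervalIntegral.integral_eq_zero_iff_of_le_of_nonneg_ae zero_le_one
    (.of_forall fun x => sq_nonneg (f x)) hint).1 h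
  rw [ip, intervalIntegral.integral_of_le zero_le_one]
  refine integral_eq_zero_of_ae ?_
  filter_upwards [hae] with x hx
  simp [pow_eq_zero_iff two_ne_zero |>.1 hx]

variable {phi : ℕ → ℝ → ℝ} {f : ℝ → ℝ}

lemma hasSum_sq_ip (hf : ContinuousOn f (Icc 0 1))
    (hparseval : ∫ x in (0 : ℝ)..1, f x ^ 2 = ∑' k : ℕ, ip f (phi (k + 1)) ^ 2) :
    HasSum (fun k : ℕ => ip f (phi (k + 1)) ^ 2) (∫ x in (0 : ℝ)..1, f x ^ 2) := by
  rw [hparseval]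
  -- were the series divergent, its `tsum` would be `0`, so all the coefficients would vanish
  refine Summable.hasSum (by_contra fun hns => hns ?_)
  have hzero := ip_eq_zero_of_integral_sq_eq_zero hf
    (hparseval.trans (tsum_eq_zero_of_not_summable hns))
  simp [hzero]

lemma tendsto_RN2 (hf : ContinuousOn f (Icc 0 1))
    (hparseval : ∫ x in (0 : ℝ)..1, f x ^ 2 = ∑' k : ℕ, ip f (phi (k + 1)) ^ 2) :
    Tendsto (RN2 f phi) atTop (𝓝 0) := by
  have hsum := hasSum_sq_ip hf hparseval
  have hRN2 : RN2 f phi = fun N => (∫ x in (0 : ℝ)..1, f x ^ 2) -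
      ∑ k ∈ Finset.range N, ip f (phi (k + 1)) ^ 2 := by
    ext N
    rw [eq_sub_iff_add_eq', ← hsum.tsum_eq, ← hsum.summable.sum_add_tsum_nat_add N]
    exact congrArg _ (tsum_congr fun k => by rw [add_right_comm, add_comm N k])
  have hlim := hsum.tendsto_sum_nat.const_sub (∫ x in (0 : ℝ)..1, f x ^ 2)
  rwa [sub_self, ← hRN2] at hlim

lemma continuousOn_aFun {p qt : ℝ → ℝ} (hp : ContDiffOn ℝ 1 p (Icc 0 1))
    (hqt : ContinuousOn qt (Icc 0 1)) (θ₂ : ℝ) : ContinuousOn (aFun p qt θ₂) (Icc 0 1) := by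
  have hp₀ : ContinuousOn p (Icc 0 1) := hp.continuousOn
  have hdp : ContinuousOn (dI p) (Icc 0 1) :=
    hp.continuousOn_derivWithin (uniqueDiffOn_Icc zero_lt_one) le_rfl
  unfold aFun
  fun_prop

lemma continuous_bFun (θ₂ : ℝ) : Continuous (bFun θ₂) := by
  unfold bFun
  fun_prop

end Tails

lemma posDef_neg_A1_add_smul_one {N₀ : ℕ} {lam : ℕ → ℝ} {q_c δ : ℝ}
    (h : ∀ n ≥ N₀ + 1, -lam n + q_c + δ < 0) (N : ℕ) : (-(A1 N₀ N lam q_c + δ • 1)).PosDef := by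
  rw [A1, smul_one_eq_diagonal, diagonal_add, diagonal_neg, posDef_diagonal_iff]
  exact fun i => neg_pos.2 (h _ (by lia))

theorem stmt_18_general {N₀ : ℕ} {lam : ℕ → ℝ} {phi : ℕ → ℝ → ℝ} {d : ℕ → ℝ} {a b : ℝ → ℝ}
    {q_c c C c₀ ε cf : ℝ} {F1m : Matrix (Fin N₀ ⊕ Fin N₀) (Fin N₀ ⊕ Fin N₀) ℝ}
    (ha : ContinuousOn a (Icc 0 1)) (hb : ContinuousOn b (Icc 0 1))
    (hparseval : ∀ f : ℝ → ℝ, ContinuousOn f (Icc 0 1) →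
      ∫ x in (0 : ℝ)..1, f x ^ 2 = ∑' k : ℕ, ip f (phi (k + 1)) ^ 2)
    (hd : ∀ᶠ n in atTop, |d n| ≤ C * √(lam n)) (hc₀ : 0 < c₀)
    (hlam : ∀ᶠ n : ℕ in atTop, c₀ * (n : ℝ) ^ 2 ≤ lam n)
    (hspec : ∀ n ≥ N₀ + 1, -lam n + q_c + |c| < 0)
    (hF1spec : ∀ μ ∈ spectrum ℂ (F1m.map (Complex.ofReal : ℝ → ℂ)), μ.re < -|c|)
    (F2m : ∀ N, Matrix (Fin N₀ ⊕ Fin N₀) (Fin (N - N₀)) ℝ) (Lvv Ktv : Fin N₀ ⊕ Fin N₀ → ℝ)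
    (α₁ α₂ α₃ α₄ : ℝ) (hcf : 0 < cf) (hε : ε ∈ Ioc 0 (1 / 2)) :
    ∀ᶠ N in atTop, ∃ (P Q1 : Matrix (Fin N₀ ⊕ Fin N₀) (Fin N₀ ⊕ Fin N₀) ℝ)
      (Q2 : Matrix (Fin (N - N₀)) (Fin (N - N₀)) ℝ) (r₁ r₂ βs γ : ℝ),
      P.PosDef ∧ Q1.PosSemidef ∧ Q2.PosSemidef ∧ 0 < r₁ ∧ 0 < r₂ ∧ 0 < βs ∧ 0 < γ ∧
      (-PsiM N₀ N P Q1 F1m Q2 (A1 N₀ N lam q_c) (F2m N) Lvv Ktv (Erow N₀ N F1m (F2m N) Lvv Ktv)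
        c r₁ βs γ α₂ α₃ (RN2 a phi N) (RN2 b phi N)).PosDef ∧
      (-Theta1 N₀ P Q1 Ktv c γ α₃ α₄ (RN2 b phi N)).PosDef ∧
      (-Theta2 N₀ N Q2 r₁ c).PosDef ∧
      γ * α₁ * |c| - r₂ < 0 ∧
      2 * γ * (-cf * lam (N + 1) + q_c)
          + βs * (∑' k : ℕ, d (N + 1 + k) ^ 2 / lam (N + 1 + k) ^ ((3 : ℝ) / 2 + ε))
            * lam (N + 1) ^ ((1 : ℝ) / 2 + ε)
          + r₂ / lam (N + 1) < 0 ∧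
      0 < 2 * γ * cf
          - βs * (∑' k : ℕ, d (N + 1 + k) ^ 2 / lam (N + 1 + k) ^ ((3 : ℝ) / 2 + ε))
            / lam (N + 1) ^ ((1 : ℝ) / 2 - ε) := by
  have hM : Tendsto
      (fun N => ∑' k : ℕ, d (N + 1 + k) ^ 2 / lam (N + 1 + k) ^ ((3 : ℝ) / 2 + ε)) atTop (𝓝 0) :=
    (tendsto_tsum_sq_div_rpow hc₀ hd hlam hε.1).comp (tendsto_add_atTop_nat 1)
  have hlam_succ : Tendsto (fun N => lam (N + 1)) atTop atTop :=
    (tendsto_atTop_of_sq_le hc₀ hlam).comp (tendsto_add_atTop_nat 1)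
  obtain ⟨P, Q1, βs, hP, hQ1, hβs, hlmi⟩ := exists_eventually_lmi hF1spec
    (posDef_neg_A1_add_smul_one hspec) (tendsto_RN2 ha (hparseval a ha))
    (tendsto_RN2 hb (hparseval b hb)) F2m Lvv Ktv 1 α₂ α₃ α₄
  have hΘ₃ : 1 * α₁ * |c| - (|α₁ * c| + 1) < 0 := by
    rw [abs_mul]
    linarith [mul_le_mul_of_nonneg_right (le_abs_self α₁) (abs_nonneg c)]
  filter_upwards [hlmi,
    eventually_theta4_neg hM hlam_succ hε.2 one_pos hcf q_c βs (|α₁ * c| + 1),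
    eventually_theta5_pos hM hlam_succ hε.2 one_pos hcf βs] with N hN hΘ₄ hΘ₅
  obtain ⟨hΘ₁, Q2, r₁, hQ2, hr₁, hΨ, hΘ₂⟩ := hN
  exact ⟨P, Q1, Q2, r₁, |α₁ * c| + 1, βs, 1, hP, hQ1, hQ2, hr₁, by positivity, hβs, one_pos,
    hΨ, hΘ₁, hΘ₂, hΘ₃, hΘ₄, hΘ₅⟩


/-- Theorem 2 (feasibility), Neumann measurement: with gains `K`, `L` placing all
eigenvalues of `F₁` in `{Re μ < -|c|}`, Young parameters with `𝔠 > 0`, and the trace/growth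
bounds `|φₙ'(0)| ≤ C√λₙ` and `λₙ ≥ c₀ n²` (for large `n`), the constraints
`Ψ ≺ 0`, `Θ₁ ≺ 0`, `Θ₂ ≺ 0`, `Θ₃ < 0`, `Θ₄ < 0`, `Θ₅ > 0` are feasible (for some
`ε ∈ (0,1/2]`) for all `N` large enough. -/
theorem stmt_18
    (θ₁ θ₂ : ℝ) (hθ₁ : θ₁ ∈ Set.Ico 0 (π/2)) (hθ₂ : θ₂ ∈ Set.Icc 0 (π/2))
    (p q qt : ℝ → ℝ) (q_c c : ℝ) (hc : c ≠ 0)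
    (hp : ContDiffOn ℝ 2 p (Set.Icc 0 1)) (hppos : ∀ x ∈ Set.Icc (0:ℝ) 1, 0 < p x)
    (hqc : ContinuousOn q (Set.Icc 0 1)) (hqpos : ∀ x ∈ Set.Icc (0:ℝ) 1, 0 < q x)
    (hqt : ∀ x, qt x = q x - q_c)
    -- eigenstructure of the Sturm–Liouville operator A f = -(p f')' + q f
    (lam : ℕ → ℝ) (phi : ℕ → ℝ → ℝ)
    (hlampos : ∀ n ≥ 1, 0 < lam n)
    (hlammono : ∀ n ≥ 1, lam n < lam (n+1))
    (hlamtop : Filter.Tendsto lam Filter.atTop Filter.atTop)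
    (hphireg : ∀ n ≥ 1, ContDiffOn ℝ 2 (phi n) (Set.Icc 0 1))
    (hphieig : ∀ n ≥ 1, ∀ x ∈ Set.Icc (0:ℝ) 1,
      -(dI (fun y => p y * dI (phi n) y) x) + q x * phi n x = lam n * phi n x)
    (hphibc : ∀ n ≥ 1,
      Real.cos θ₁ * phi n 0 - Real.sin θ₁ * dI (phi n) 0 = 0 ∧
      Real.cos θ₂ * phi n 1 + Real.sin θ₂ * dI (phi n) 1 = 0)
    (horth : ∀ m ≥ 1, ∀ n ≥ 1, ip (phi m) (phi n) = if m = n then 1 else 0)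
    (hparseval : ∀ f : ℝ → ℝ, ContinuousOn f (Set.Icc 0 1) →
      (∫ x in (0:ℝ)..1, (f x)^2) = ∑' k : ℕ, (ip f (phi (k+1)))^2)
    -- additional assumptions: |φₙ'(0)| ≤ C √λₙ and λₙ ≥ c₀ n² for n large
    (hphibdd : ∃ C : ℝ, ∀ n ≥ 1, |dI (phi n) 0| ≤ C * Real.sqrt (lam n))
    (hlamgrowth : ∃ c₀ > (0:ℝ), ∃ n₁ : ℕ, ∀ n ≥ n₁, c₀ * (n:ℝ)^2 ≤ lam n)
    -- dimensions and gains
    (N₀ : ℕ) (hN₀ : 1 ≤ N₀)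
    (hspec : ∀ n ≥ N₀ + 1, -lam n + q_c + |c| < 0)
    (K L : Fin N₀ → ℝ)
    (F1m : Matrix (Fin N₀ ⊕ Fin N₀) (Fin N₀ ⊕ Fin N₀) ℝ)
    (hF1m : F1m = F1 N₀ lam q_c (B0 N₀ p qt θ₂ q_c lam phi)
      (fun i => dI (phi (i.val + 1)) 0) K L)
    (hF1spec : ∀ μ : ℂ, μ ∈ spectrum ℂ (F1m.map (Complex.ofReal : ℝ → ℂ)) → μ.re < -|c|)
    -- Young parameters
    (α₁ α₂ α₃ α₄ cf : ℝ) (hα₁ : 0 < α₁) (hα₂ : 0 < α₂) (hα₃ : 0 < α₃) (hα₄ : 0 < α₄)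
    (hcf : cf = 1 - (|c|/α₁ + 1/α₂ + 1/α₃ + |c|/α₄)/2) (hcfpos : 0 < cf) :
    ∃ N₁ : ℕ, N₀ + 1 ≤ N₁ ∧ ∀ N ≥ N₁,
      ∃ ε ∈ Set.Ioc (0:ℝ) (1/2),
      ∃ (P Q1 : Matrix (Fin N₀ ⊕ Fin N₀) (Fin N₀ ⊕ Fin N₀) ℝ)
        (Q2 : Matrix (Fin (N - N₀)) (Fin (N - N₀)) ℝ) (r₁ r₂ βs γ : ℝ),
        P.PosDef ∧ Q1.PosSemidef ∧ Q2.PosSemidef ∧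
        0 < r₁ ∧ 0 < r₂ ∧ 0 < βs ∧ 0 < γ ∧
        (-(PsiM N₀ N P Q1 F1m Q2 (A1 N₀ N lam q_c)
            (F2 N₀ N L
              (fun i => dI (phi (N₀ + i.val + 1)) 0 / lam (N₀ + i.val + 1)))
            (Lv N₀ L) (Kt N₀ K)
            (Erow N₀ N F1m
              (F2 N₀ N L
                (fun i => dI (phi (N₀ + i.val + 1)) 0 / lam (N₀ + i.val + 1)))
              (Lv N₀ L) (Kt N₀ K))
            c r₁ βs γ α₂ α₃ (RN2 (aFun p qt θ₂) phi N) (RN2 (bFun θ₂) phi N))).PosDef ∧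
        (-(Theta1 N₀ P Q1 (Kt N₀ K) c γ α₃ α₄ (RN2 (bFun θ₂) phi N))).PosDef ∧
        (-(Theta2 N₀ N Q2 r₁ c)).PosDef ∧
        γ * α₁ * |c| - r₂ < 0 ∧
        2*γ*(-cf * lam (N+1) + q_c)
            + βs * (∑' k : ℕ,
                (dI (phi (N + 1 + k)) 0)^2 / lam (N + 1 + k) ^ ((3:ℝ)/2 + ε))
              * lam (N+1) ^ ((1:ℝ)/2 + ε)
            + r₂ / lam (N+1) < 0 ∧
        0 < 2*γ*cf - βs * (∑' k : ℕ,
              (dI (phi (N + 1 + k)) 0)^2 / lam (N + 1 + k) ^ ((3:ℝ)/2 + ε))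
            / lam (N+1) ^ ((1:ℝ)/2 - ε) := by
  obtain ⟨C, hC⟩ := hphibdd
  obtain ⟨c₀, hc₀, n₁, hgrowth⟩ := hlamgrowth
  have hqt' : ContinuousOn qt (Icc 0 1) :=
    (hqc.sub continuousOn_const).congr fun x _ => hqt x
  obtain ⟨N₁, hN₁⟩ := eventually_atTop.1 (stmt_18_general
    (continuousOn_aFun (hp.of_le one_le_two) hqt' θ₂) (continuous_bFun θ₂).continuousOn hparseval
    (eventually_atTop.2 ⟨1, hC⟩) hc₀ (eventually_atTop.2 ⟨n₁, hgrowth⟩) hspec hF1spec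
    (fun N => F2 N₀ N L fun i => dI (phi (N₀ + i.val + 1)) 0 / lam (N₀ + i.val + 1))
    (Lv N₀ L) (Kt N₀ K) α₁ α₂ α₃ α₄ hcfpos (ε := 1 / 2) ⟨by norm_num, le_rfl⟩)
  exact ⟨max N₁ (N₀ + 1), le_max_right _ _, fun N hN =>
    ⟨1 / 2, ⟨by norm_num, le_rfl⟩, hN₁ N (le_of_max_le_left hN)⟩⟩

end
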